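/- Let k be a positive integer, let K ⊆ ℝ^k be a nonempty, compact, convex set, and let F : ℝ^k → ℝ^k be continuous. Then there exists a point x* ∈ K such that ⟨F(x*), x − x*⟩ ≥ 0 for all x ∈ K; that is, the variational inequality VI(K, F) has a solution. -/

import Mathlib

/-!
A zero of the normal map `x ↦ x - P x + F (P x)`, where `P` is the metric projection onto `K`, is
carried by `P` to a solution, so the theorem reduces to Brouwer's fixed point theorem.

Brouwer's theorem comes from Milnor's volume argument. Let `v` be `C¹` and vanish on the frontier of
a bounded set `s`. For small `t` the map `x ↦ x + t v(x)` on `s`, extended by the identity, is a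
Lipschitz-small perturbation of the identity, hence a bijection that preserves `s`, so
`∫ₛ det (1 + t Dv) = vol s`. The left-hand side is a polynomial in `t`, so equality holds for
`t = 1` as well. A `C¹` retraction onto the bounding sphere of a ball `s` would have identically
vanishing Jacobian, contradicting `vol s > 0`.
-/

open RealInnerProductSpace

open MeasureTheory Metric Set Topology Polynomial

section Perturbation

variable {E : Type*} [NormedAddCommGroup E] [NormedSpace ℝ E]

theorem inter_frontier_nonempty_of_isPreconnected {X : Type*} [TopologicalSpace X] {s t : Set X}
    (ht : IsPreconnected t) (hin : (t ∩ s).Nonempty) (hout : (t ∩ sᶜ).Nonempty) :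
    (t ∩ frontier s).Nonempty := by
  rw [← not_disjoint_iff_nonempty_inter]
  intro hdisj
  have mem_interior : ∀ x ∈ t, x ∈ closure s → x ∈ interior s := fun x hxt hxs =>
    by_contra fun hxi => disjoint_left.1 hdisj hxt ⟨hxs, hxi⟩
  obtain ⟨x, hxt, hxs⟩ := hin
  obtain ⟨y, hyt, hys⟩ := hout
  have hsub : t ⊆ interior s := by
    refine ht.subset_of_closure_inter_subset isOpen_interior
      ⟨x, hxt, mem_interior x hxt (subset_closure hxs)⟩ ?_
    rintro z ⟨hzs, hzt⟩
    exact mem_interior z hzt (closure_mono interior_subset hzs)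
  exact hys (interior_subset (hsub hyt))

theorem lipschitzWith_indicator {F : Type*} [SeminormedAddCommGroup F] {s : Set E} {f : E → F}
    {C : NNReal} (hf : LipschitzOnWith C f (closure s)) (hfr : ∀ x ∈ frontier s, f x = 0) :
    LipschitzWith C (s.indicator f) := by
  have norm_le : ∀ x ∈ s, ∀ y ∉ s, ‖f x‖ ≤ C * dist x y := by
    intro x hx y hy
    obtain ⟨z, hzseg, hzfr⟩ : (segment ℝ x y ∩ frontier s).Nonempty :=
      inter_frontier_nonempty_of_isPreconnected (convex_segment x y).isPreconnected
        ⟨x, left_mem_segment ℝ x y, hx⟩ ⟨y, right_mem_segment ℝ x y, hy⟩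
    calc ‖f x‖ = dist (f x) (f z) := by rw [hfr z hzfr, dist_zero_right]
      _ ≤ C * dist x z :=
        hf.dist_le_mul x (subset_closure hx) z (frontier_subset_closure hzfr)
      _ ≤ C * dist x y := by
        gcongr
        linarith [dist_add_dist_of_mem_segment hzseg, dist_nonneg (x := z) (y := y)]
  refine LipschitzWith.of_dist_le_mul fun x y => ?_
  by_cases hx : x ∈ s <;> by_cases hy : y ∈ s
  · simpa only [indicator_of_mem hx, indicator_of_mem hy] using
      hf.dist_le_mul x (subset_closure hx) y (subset_closure hy)
  · simpa only [indicator_of_mem hx, indicator_of_notMem hy, dist_zero_right] using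
      norm_le x hx y hy
  · simpa only [indicator_of_notMem hx, indicator_of_mem hy, dist_zero_left, dist_comm x y] using
      norm_le y hy x hx
  · simp only [indicator_of_notMem hx, indicator_of_notMem hy, dist_self]
    positivity

theorem bijective_id_add_of_lipschitzWith [CompleteSpace E] {w : E → E} {c : NNReal}
    (hw : LipschitzWith c w) (hc : c < 1) : Function.Bijective fun x => x + w x := by
  have happrox : ApproximatesLinearOn (fun x => x + w x)
      (ContinuousLinearEquiv.refl ℝ E : E →L[ℝ] E) univ c := by
    rw [ApproximatesLinearOn.approximatesLinearOn_iff_lipschitzOnWith, lipschitzOnWith_univ]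
    convert hw using 1
    ext x
    simp
  have hc' : Subsingleton E ∨
      c < ‖((ContinuousLinearEquiv.refl ℝ E).symm : E →L[ℝ] E)‖₊⁻¹ := by
    rcases subsingleton_or_nontrivial E with hE | hE
    · exact .inl hE
    · right
      simpa using hc
  exact ⟨injOn_univ.1 (happrox.injOn hc'), happrox.surjective hc'⟩

theorem image_eq_self_of_eqOn_id_compl {α : Type*} {s : Set α} {f : α → α}
    (hf : Function.Bijective f) (hid : EqOn f id sᶜ) : f '' s = s := by
  rw [← compl_inj_iff, ← image_compl_eq hf, hid.image_eq, image_id]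

end Perturbation

section JacobianIntegral

theorem exists_polynomial_eval_eq_integral {α : Type*} [MeasurableSpace α] {μ : Measure α}
    {q : α → ℝ[X]} {n : ℕ} (hdeg : ∀ x, (q x).natDegree ≤ n)
    (hint : ∀ t, Integrable (fun x => (q x).eval t) μ) :
    ∃ p : ℝ[X], ∀ t, p.eval t = ∫ x, (q x).eval t ∂μ := by
  let s := Finset.range (n + 1)
  let node : ℕ → ℝ := Nat.cast
  have hinterp (x : α) : q x = Lagrange.interpolate s node fun i => (q x).eval (node i) := by
    refine Lagrange.eq_interpolate Nat.cast_injective.injOn ?_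
    rw [Finset.card_range]
    exact degree_le_natDegree.trans_lt (by exact_mod_cast Nat.lt_succ_of_le (hdeg x))
  refine ⟨Lagrange.interpolate s node fun i => ∫ x, (q x).eval (node i) ∂μ, fun t => ?_⟩
  have heval (x : α) :
      (q x).eval t = ∑ i ∈ s, (q x).eval (node i) * (Lagrange.basis s node i).eval t := by
    conv_lhs => rw [hinterp x]
    simp only [Lagrange.interpolate_apply, eval_finsetSum, eval_mul, eval_C]
  simp_rw [heval]
  rw [integral_finsetSum _ fun i _ => (hint (node i)).mul_const _]
  simp only [Lagrange.interpolate_apply, eval_finsetSum, eval_mul, eval_C, integral_mul_const]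

variable {E : Type*} [NormedAddCommGroup E] [NormedSpace ℝ E]

theorem continuous_det_id_add_smul {X : Type*} [TopologicalSpace X] {A : X → E →L[ℝ] E}
    (hA : Continuous A) :
    Continuous fun p : ℝ × X => (.id ℝ E + p.1 • A p.2 : E →L[ℝ] E).det :=
  ContinuousLinearMap.continuous_det.comp (by fun_prop)

theorem eventually_forall_det_id_add_smul_pos {X : Type*} [TopologicalSpace X]
    {A : X → E →L[ℝ] E} (hA : Continuous A) {K : Set X} (hK : IsCompact K) :
    ∀ᶠ t in 𝓝 (0 : ℝ), ∀ x ∈ K, 0 < (.id ℝ E + t • A x : E →L[ℝ] E).det := by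
  refine hK.eventually_forall_of_forall_eventually fun x _ =>
    (continuous_det_id_add_smul hA).continuousAt.eventually (lt_mem_nhds ?_)
  simp [ContinuousLinearMap.det]

variable [FiniteDimensional ℝ E]

theorem exists_polynomial_eval_eq_det_id_add_smul (A : E →L[ℝ] E) :
    ∃ p : ℝ[X], p.natDegree ≤ Module.finrank ℝ E ∧
      ∀ t : ℝ, p.eval t = (.id ℝ E + t • A : E →L[ℝ] E).det := by
  let b := Module.finBasis ℝ E
  let M := LinearMap.toMatrix b b (A : E →ₗ[ℝ] E)
  refine ⟨((X : ℝ[X]) • M.map C + (1 : Matrix _ _ ℝ).map C).det, ?_, fun t => ?_⟩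
  · simpa only [Fintype.card_fin] using natDegree_det_X_add_C_le M 1
  · have hmat : LinearMap.toMatrix b b (.id ℝ E + t • A : E →L[ℝ] E) = t • M + 1 := by
      simp [M, add_comm]
    rw [ContinuousLinearMap.det, ← LinearMap.det_toMatrix b, hmat, ← coe_evalRingHom,
      RingHom.map_det]
    congr 1
    ext i j
    obtain rfl | hij := eq_or_ne i j
    · simp [mul_comm t]
    · simp [hij, mul_comm t]

theorem exists_polynomial_eval_eq_setIntegral_det_id_add_smul {Y : Type*} [TopologicalSpace Y]
    [T2Space Y] [MeasurableSpace Y] [OpensMeasurableSpace Y] (μ : Measure Y)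
    [IsFiniteMeasureOnCompacts μ] {s : Set Y} (hs : IsCompact (closure s)) {A : Y → E →L[ℝ] E}
    (hA : Continuous A) :
    ∃ p : ℝ[X], ∀ t : ℝ, p.eval t = ∫ x in s, (.id ℝ E + t • A x : E →L[ℝ] E).det ∂μ := by
  choose q hdeg hq using fun x => exists_polynomial_eval_eq_det_id_add_smul (A x)
  have hint (t : ℝ) : IntegrableOn (fun x => (q x).eval t) s μ := by
    have hcont : Continuous fun x => (q x).eval t := by
      simp only [hq]
      exact (continuous_det_id_add_smul hA).comp (.prodMk_right t)
    exact (hcont.continuousOn.integrableOn_compact hs).mono_set subset_closure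
  simpa only [hq] using exists_polynomial_eval_eq_integral hdeg hint

variable [MeasurableSpace E] [BorelSpace E] (μ : Measure E) [μ.IsAddHaarMeasure] {s : Set E}

theorem eventually_setIntegral_det_id_add_smul_fderiv (hs : MeasurableSet s)
    (hsb : Bornology.IsBounded s) {v : E → E} (hv : ContDiff ℝ 1 v)
    (hfr : ∀ x ∈ frontier s, v x = 0) :
    ∀ᶠ t in 𝓝 (0 : ℝ),
      ∫ x in s, (.id ℝ E + t • fderiv ℝ v x : E →L[ℝ] E).det ∂μ = μ.real s := by
  have : CompleteSpace E := FiniteDimensional.complete ℝ E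
  obtain ⟨C, hC⟩ :=
    (hv.locallyLipschitz.locallyLipschitzOn (s := closure s)).exists_lipschitzOnWith_of_compact
      hsb.isCompact_closure
  have hsmall : ∀ᶠ t in 𝓝 (0 : ℝ), ‖t‖₊ * C < 1 :=
    (show Continuous fun t : ℝ => ‖t‖₊ * C by fun_prop).continuousAt.eventually
      (gt_mem_nhds (by simp))
  filter_upwards [hsmall, eventually_forall_det_id_add_smul_pos
    (hv.continuous_fderiv one_ne_zero) hsb.isCompact_closure] with t htC hdet
  let φ : E → E := fun x => x + t • s.indicator v x
  have hbij : Function.Bijective φ :=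
    bijective_id_add_of_lipschitzWith (w := fun x => t • s.indicator v x)
      ((lipschitzWith_smul t).comp (lipschitzWith_indicator hC hfr)) htC
  have himage : φ '' s = s :=
    image_eq_self_of_eqOn_id_compl hbij fun x hx => by simp [φ, indicator_of_notMem hx]
  have hderiv : ∀ x ∈ s, HasFDerivWithinAt φ (.id ℝ E + t • fderiv ℝ v x) s x := by
    intro x hx
    have hvx : HasFDerivAt v (fderiv ℝ v x) x := (hv.differentiable one_ne_zero x).hasFDerivAt
    exact ((hasFDerivAt_id x).add (hvx.const_smul t)).hasFDerivWithinAt.congr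
      (fun y hy => by simp [φ, indicator_of_mem hy]) (by simp [φ, indicator_of_mem hx])
  calc ∫ x in s, (.id ℝ E + t • fderiv ℝ v x : E →L[ℝ] E).det ∂μ
      = ∫ x in s, |(.id ℝ E + t • fderiv ℝ v x : E →L[ℝ] E).det| • (1 : ℝ) ∂μ :=
        setIntegral_congr_fun hs fun x hx => by
          simp only [smul_eq_mul, mul_one, abs_of_pos (hdet x (subset_closure hx))]
    _ = ∫ _ in φ '' s, (1 : ℝ) ∂μ :=
        (integral_image_eq_integral_abs_det_fderiv_smul μ hs hderiv hbij.1.injOn fun _ => 1).symm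
    _ = μ.real s := by rw [himage, setIntegral_const, smul_eq_mul, mul_one]

theorem setIntegral_det_fderiv_eq_measureReal (hs : MeasurableSet s)
    (hsb : Bornology.IsBounded s) {f : E → E} (hf : ContDiff ℝ 1 f)
    (hfr : ∀ x ∈ frontier s, f x = x) :
    ∫ x in s, (fderiv ℝ f x).det ∂μ = μ.real s := by
  have hv : ContDiff ℝ 1 fun x => f x - x := hf.sub contDiff_id
  have hfderiv (x : E) :
      fderiv ℝ f x = .id ℝ E + (1 : ℝ) • fderiv ℝ (fun x => f x - x) x := by
    rw [fderiv_fun_sub (hf.differentiable one_ne_zero x) differentiableAt_fun_id, fderiv_fun_id,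
      one_smul, add_sub_cancel]
  obtain ⟨p, hp⟩ := exists_polynomial_eval_eq_setIntegral_det_id_add_smul μ
    hsb.isCompact_closure (hv.continuous_fderiv one_ne_zero)
  have hconst : p = C (μ.real s) := by
    have hev : ∀ᶠ t in 𝓝 (0 : ℝ), p.eval t = (C (μ.real s)).eval t := by
      filter_upwards [eventually_setIntegral_det_id_add_smul_fderiv μ hs hsb hv
        fun x hx => sub_eq_zero.2 (hfr x hx)] with t ht
      rw [hp, ht, eval_C]
    exact eq_of_infinite_eval_eq _ _ (infinite_of_mem_nhds 0 hev)
  simp_rw [hfderiv]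
  rw [← hp 1, hconst, eval_C]

end JacobianIntegral

section Brouwer

variable {E : Type*} [NormedAddCommGroup E] [InnerProductSpace ℝ E]

theorem inner_apply_eq_zero_of_hasFDerivAt_of_norm_eq
    {G : Type*} [NormedAddCommGroup G] [NormedSpace ℝ G]
    {f : G → E} {f' : G →L[ℝ] E} {x : G} {r : ℝ} (hf : HasFDerivAt f f' x)
    (hr : ∀ y, ‖f y‖ = r) (w : G) : ⟪f x, f' w⟫ = 0 := by
  have hsq : HasFDerivAt (fun y => ‖f y‖ ^ 2) (0 : G →L[ℝ] ℝ) x := by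
    simpa only [hr] using hasFDerivAt_const (r ^ 2) x
  simpa using DFunLike.congr_fun (hf.norm_sq.unique hsq) w

variable [FiniteDimensional ℝ E]

theorem det_eq_zero_of_hasFDerivAt_of_norm_eq {f : E → E} {f' : E →L[ℝ] E} {x : E} {r : ℝ}
    (hf : HasFDerivAt f f' x) (hr : ∀ y, ‖f y‖ = r) (hr0 : r ≠ 0) : f'.det = 0 := by
  by_contra hdet
  obtain ⟨w, hw⟩ : ∃ w, f' w = f x := by
    simpa using (LinearMap.equivOfIsUnitDet (isUnit_iff_ne_zero.2 hdet)).surjective (f x)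
  have hinner := inner_apply_eq_zero_of_hasFDerivAt_of_norm_eq hf hr w
  rw [hw, real_inner_self_eq_norm_sq, hr] at hinner
  exact hr0 (pow_eq_zero_iff two_ne_zero |>.1 hinner)

theorem not_exists_contDiff_retraction_sphere {R : ℝ} (hR : 0 < R) :
    ¬∃ f : E → E, ContDiff ℝ 1 f ∧ (∀ x, ‖f x‖ = R) ∧ ∀ x, ‖x‖ = R → f x = x := by
  rintro ⟨f, hf, hnorm, hid⟩
  borelize E
  have hvol : ∫ x in ball (0 : E) R, (fderiv ℝ f x).det = volume.real (ball (0 : E) R) := by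
    refine setIntegral_det_fderiv_eq_measureReal volume measurableSet_ball isBounded_ball hf ?_
    intro x hx
    rw [frontier_ball _ hR.ne'] at hx
    exact hid x (mem_sphere_zero_iff_norm.1 hx)
  have hdet (x : E) : (fderiv ℝ f x).det = 0 :=
    det_eq_zero_of_hasFDerivAt_of_norm_eq (hf.differentiable one_ne_zero x).hasFDerivAt hnorm hR.ne'
  have hpos : 0 < volume.real (ball (0 : E) R) :=
    ENNReal.toReal_pos (measure_ball_pos _ _ hR).ne' measure_ball_lt_top.ne
  simp only [hdet, integral_zero] at hvol
  exact hpos.ne hvol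

theorem exists_eq_zero_of_contDiff_of_eq_self_on_sphere {R : ℝ} (hR : 0 < R) {f : E → E}
    (hf : ContDiff ℝ 1 f) (hid : ∀ x, ‖x‖ = R → f x = x) : ∃ x, f x = 0 := by
  by_contra! hne
  refine not_exists_contDiff_retraction_sphere hR
    ⟨fun x => (R / ‖f x‖) • f x, ?_, fun x => ?_, fun x hx => ?_⟩
  · exact (contDiff_const.div (hf.norm ℝ hne) fun x => norm_ne_zero_iff.2 (hne x)).smul hf
  · rw [norm_smul, norm_div, norm_norm, Real.norm_of_nonneg hR.le,
      div_mul_cancel₀ _ (norm_ne_zero_iff.2 (hne x))]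
  · simp only [hid x hx, hx, div_self hR.ne', one_smul]

theorem exists_eq_zero_of_continuous_of_eq_self_on_sphere {R : ℝ} (hR : 0 < R) {f : E → E}
    (hf : Continuous f) (hid : ∀ x, ‖x‖ = R → f x = x) : ∃ x, f x = 0 := by
  by_contra! hne
  obtain ⟨g, hg, hclose, hsupp⟩ := (hf.sub continuous_id).exists_contDiff_approx 1 hf.norm
    fun x => norm_pos_iff.2 (hne x)
  have hgid : ∀ x, ‖x‖ = R → x + g x = x := by
    intro x hx
    have hgx : g x = 0 := Function.support_subset_iff'.1 hsupp x (by simp [hid x hx])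
    rw [hgx, add_zero]
  obtain ⟨x, hx⟩ :=
    exists_eq_zero_of_contDiff_of_eq_self_on_sphere hR (contDiff_id.add hg) hgid
  have hgx : g x = -x := eq_neg_of_add_eq_zero_right hx
  refine (hclose x).ne ?_
  rw [hgx, Pi.sub_apply, id_eq, dist_eq_norm, neg_sub_left, sub_add_cancel, norm_neg]

theorem exists_isFixedPt_of_isBounded_range {T : E → E} (hT : Continuous T)
    (hb : Bornology.IsBounded (range T)) : ∃ x, Function.IsFixedPt T x := by
  obtain ⟨R, hR, hTR⟩ := hb.exists_pos_norm_le
  replace hTR (x : E) : ‖T x‖ ≤ R := hTR _ (mem_range_self x)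
  obtain ⟨χ, hχ0, hχ1, hχ⟩ := exists_continuous_zero_one_of_isClosed
    (isClosed_sphere (x := (0 : E)) (ε := R + 1)) (isClosed_closedBall (x := (0 : E)) (ε := R))
    (sphere_disjoint_ball.mono_right (closedBall_subset_ball (lt_add_one R)))
  obtain ⟨x, hx⟩ := exists_eq_zero_of_continuous_of_eq_self_on_sphere (f := fun x => x - χ x • T x)
    (by positivity : 0 < R + 1) (by fun_prop)
    fun x hx => by simp [hχ0 (mem_sphere_zero_iff_norm.2 hx)]
  rw [sub_eq_zero] at hx
  have hxR : ‖x‖ ≤ R := by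
    calc ‖x‖ = χ x * ‖T x‖ := by rw [← Real.norm_of_nonneg (hχ x).1, ← norm_smul, ← hx]
      _ ≤ ‖T x‖ := mul_le_of_le_one_left (norm_nonneg _) (hχ x).2
      _ ≤ R := hTR x
  rw [hχ1 (mem_closedBall_zero_iff.2 hxR), Pi.one_apply, one_smul] at hx
  exact ⟨x, hx.symm⟩

end Brouwer

section VariationalInequality

variable {E : Type*} [NormedAddCommGroup E] [InnerProductSpace ℝ E] {K : Set E}

theorem lipschitzWith_one_of_inner_sub_nonpos {P : E → E} (hPK : ∀ u, P u ∈ K)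
    (hP : ∀ u, ∀ w ∈ K, ⟪u - P u, w - P u⟫ ≤ 0) : LipschitzWith 1 P := by
  refine LipschitzWith.of_dist_le_mul fun x y => ?_
  rw [NNReal.coe_one, one_mul, dist_eq_norm, dist_eq_norm]
  have hx := hP x (P y) (hPK y)
  have hy := hP y (P x) (hPK x)
  have hfirm : ‖P x - P y‖ * ‖P x - P y‖ ≤ ‖x - y‖ * ‖P x - P y‖ := by
    refine le_trans ?_ (real_inner_le_norm (x - y) (P x - P y))
    rw [← real_inner_self_eq_norm_mul_norm]
    simp only [inner_sub_left, inner_sub_right] at hx hy ⊢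
    linarith
  rcases (norm_nonneg (P x - P y)).eq_or_lt with heq | hpos
  · exact heq ▸ norm_nonneg _
  · exact le_of_mul_le_mul_right hfirm hpos

theorem exists_continuous_projection (hKne : K.Nonempty) (hK : IsComplete K)
    (hKconv : Convex ℝ K) :
    ∃ P : E → E, Continuous P ∧ (∀ u, P u ∈ K) ∧ ∀ u, ∀ w ∈ K, ⟪u - P u, w - P u⟫ ≤ 0 := by
  choose P hPK hP using exists_norm_eq_iInf_of_complete_convex hKne hK hKconv
  have hinner (u : E) : ∀ w ∈ K, ⟪u - P u, w - P u⟫ ≤ 0 :=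
    (norm_eq_iInf_iff_real_inner_le_zero hKconv (hPK u)).1 (hP u)
  exact ⟨P, (lipschitzWith_one_of_inner_sub_nonpos hPK hinner).continuous, hPK, hinner⟩

theorem vi_solution_exists_general [FiniteDimensional ℝ E] (hKne : K.Nonempty)
    (hKcomp : IsCompact K) (hKconv : Convex ℝ K) {F : E → E} (hF : ContinuousOn F K) :
    ∃ x ∈ K, ∀ y ∈ K, 0 ≤ ⟪F x, y - x⟫ := by
  obtain ⟨P, hPcont, hPK, hP⟩ := exists_continuous_projection hKne hKcomp.isComplete hKconv
  have hGcont : ContinuousOn (fun x => x - F x) K := continuousOn_id.sub hF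
  have hbounded : Bornology.IsBounded (range fun u => P u - F (P u)) :=
    (hKcomp.image_of_continuousOn hGcont).isBounded.subset
      (range_subset_iff.2 fun u => ⟨P u, hPK u, rfl⟩)
  obtain ⟨u, hu⟩ := exists_isFixedPt_of_isBounded_range
    (hGcont.comp_continuous hPcont hPK) hbounded
  refine ⟨P u, hPK u, fun y hy => ?_⟩
  have hdisplacement : u - P u = -F (P u) := by
    rw [sub_eq_iff_eq_add, neg_add_eq_sub]
    exact hu.symm
  have hinner := hP u y hy
  rwa [hdisplacement, inner_neg_left, neg_nonpos] at hinner

end VariationalInequality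

/-- Existence of a solution to the variational inequality VI(K, F) on a
nonempty, compact, convex subset `K` of `ℝ^k` with continuous `F`. -/
theorem vi_solution_exists (k : ℕ) (hk : 0 < k)
    (K : Set (EuclideanSpace ℝ (Fin k))) (hKne : K.Nonempty)
    (hKcomp : IsCompact K) (hKconv : Convex ℝ K)
    (F : EuclideanSpace ℝ (Fin k) → EuclideanSpace ℝ (Fin k))
    (hF : Continuous F) :
    ∃ x ∈ K, ∀ y ∈ K, 0 ≤ ⟪F x, y - x⟫ :=
  vi_solution_exists_general hKne hKcomp hKconv hF.continuousOn
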